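/- Let p be a prime and let ℚ̄_p be an algebraic closure of the field ℚ_p of p-adic numbers. Then ℚ̄_p is generated over ℚ_p by its elements that are algebraic over ℚ; that is, the intermediate field of ℚ̄_p/ℚ_p generated by the set {x ∈ ℚ̄_p : x is algebraic over ℚ} is all of ℚ̄_p. -/

import Mathlib

/-!
Let `a` be algebraic over `ℚ_p` with minimal polynomial `f`. Since `ℚ` is dense in `ℚ_p`, there is
a monic `g` over `ℚ`, of the same degree, with coefficients as close to those of `f` as desired.
By continuity of roots, `g` has a root `b` closer to `a` than any other conjugate of `a`, so
Krasner's lemma gives `a ∈ ℚ_p(b)`, and `b` is algebraic over `ℚ`. The norm on the algebraic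
closure is the spectral norm.
-/

open Polynomial in
/-- Continuity of roots together with density of `ℚ` in `ℚ_p`: the elements algebraic over `ℚ`
are dense in the algebraic closure of `ℚ_p`. -/
theorem exists_isAlgebraic_rat_norm_sub_lt (p : ℕ) [Fact p.Prime] (a : PadicAlgCl p)
    {δ : ℝ} (hδ : 0 < δ) : ∃ b : PadicAlgCl p, IsAlgebraic ℚ b ∧ ‖a - b‖ < δ := by
  have ha : IsIntegral ℚ_[p] a := Algebra.IsIntegral.isIntegral a
  set f := minpoly ℚ_[p] a
  have hdeg : f.natDegree ≠ 0 := (minpoly.natDegree_pos ha).ne'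
  have hM : 0 < max ‖a‖ 1 := by positivity
  -- This tolerance makes the bound in the continuity of roots equal to `δ`.
  have hε : 0 < (δ / max ‖a‖ 1) ^ f.natDegree / (f.natDegree + 1) := by positivity
  have hdense : DenseRange (algebraMap ℚ ℚ_[p]) := by
    simpa using! Padic.denseRange_ratCast p
  obtain ⟨g, gmon, gdeg, gcoeff⟩ :=
    exists_monic_and_natDegree_eq_and_norm_map_algebraMap_coeff_sub_lt hdense
      (minpoly.monic ha) hε
  obtain ⟨b, hb, hab⟩ := exists_aroots_norm_sub_lt_of_norm_coeff_sub_lt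
    hε (minpoly.aeval ℚ_[p] a) (minpoly.monic ha) (gmon.map _)
    ((g.natDegree_map _).trans gdeg.symm) gcoeff (IsAlgClosed.splits _)
  refine ⟨b, ⟨g, gmon.ne_zero, ?_⟩, ?_⟩
  · have hroot := (mem_aroots.mp hb).2
    rwa [aeval_map_algebraMap] at hroot
  · rwa [mul_div_cancel₀ _ (by positivity), Real.pow_rpow_inv_natCast (by positivity) hdeg,
      div_mul_cancel₀ _ hM.ne'] at hab

/-- An algebraic closure of `ℚ_p` is generated over `ℚ_p` by its elements that are algebraic
over `ℚ`. -/
theorem padic_algebraic_closure_generated_by_algebraic_numbers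
    (p : ℕ) [Fact p.Prime] :
    IntermediateField.adjoin ℚ_[p]
      {x : AlgebraicClosure ℚ_[p] | IsAlgebraic ℚ x} = ⊤ := by
  refine eq_top_iff.mpr fun a _ => ?_
  have ha : IsIntegral ℚ_[p] a := Algebra.IsIntegral.isIntegral a
  -- `a` has finitely many conjugates, so those other than `a` stay at a positive distance.
  obtain ⟨δ, hδ, hsep⟩ : ∃ δ > 0, ∀ a' : PadicAlgCl p, IsConjRoot ℚ_[p] a a' → a ≠ a' →
      δ ≤ ‖a - a'‖ := by
    have hfin : ((minpoly ℚ_[p] a).rootSet (PadicAlgCl p) \ {a}).Finite :=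
      (Polynomial.rootSet_finite _ _).sdiff
    obtain ⟨δ, hδ, hball⟩ := Metric.isOpen_iff.mp hfin.isClosed.isOpen_compl a (by simp)
    refine ⟨δ, hδ, fun a' hconj hne => ?_⟩
    by_contra! hlt
    refine hball (show a' ∈ Metric.ball a δ by rwa [Metric.mem_ball', dist_eq_norm])
      ⟨(isConjRoot_iff_mem_minpoly_rootSet ha).mp hconj, hne.symm⟩
  obtain ⟨b, hb, hab⟩ := exists_isAlgebraic_rat_norm_sub_lt p a hδ
  have hmem : a ∈ IntermediateField.adjoin ℚ_[p] {b} :=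
    IsKrasner.krasner (minpoly.irreducible ha).separable (IsAlgClosed.splits _)
      (Algebra.IsIntegral.isIntegral b) fun a' h₁ h₂ => hab.trans_le (hsep a' h₁ h₂)
  have hsub : {b} ⊆ {x : AlgebraicClosure ℚ_[p] | IsAlgebraic ℚ x} :=
    Set.singleton_subset_iff.mpr hb
  exact IntermediateField.adjoin.mono _ _ _ hsub hmem
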